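/- arXiv:1907.05362 — 5 statements merged into one kernel-verified Lean document; each statement's English description precedes it below -/
import Mathlib

section
/- For all continuous maps F, G, H : ℝ → Matrix n n ℂ, the operation ▷ satisfies the pre-Lie relation F ▷ (G ▷ H) − (F ▷ G) ▷ H = G ▷ (F ▷ H) − (G ▷ F) ▷ H (as equality of maps ℝ → Matrix n n ℂ). -/
attribute [local instance] Matrix.normedAddCommGroup Matrix.normedSpace

/-- The binary operation `(P ▷ Q)(t) = ∫₀ᵗ [P(u), Q(t)] du` on maps
`ℝ → Matrix n n ℂ`, where `[X,Y] = XY − YX`. -/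
noncomputable def rhd {n : ℕ} (P Q : ℝ → Matrix (Fin n) (Fin n) ℂ) :
    ℝ → Matrix (Fin n) (Fin n) ℂ :=
  fun t => ∫ u in (0:ℝ)..t, (P u * Q t - Q t * P u)

/-- Matrix multiplication as a continuous bilinear map. -/
noncomputable def mulBil (n : ℕ) : Matrix (Fin n) (Fin n) ℂ →L[ℝ] Matrix (Fin n) (Fin n) ℂ →L[ℝ]
    Matrix (Fin n) (Fin n) ℂ :=
  LinearMap.toContinuousLinearMap
    (LinearMap.toContinuousLinearMap.toLinearMap ∘ₗ LinearMap.mul ℝ (Matrix (Fin n) (Fin n) ℂ))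

lemma mulBil_apply {n : ℕ} (A B : Matrix (Fin n) (Fin n) ℂ) : mulBil n A B = A * B := rfl

lemma hasDerivAt_mat_mul {n : ℕ} {A B : ℝ → Matrix (Fin n) (Fin n) ℂ}
    {A' B' : Matrix (Fin n) (Fin n) ℂ} {t : ℝ}
    (hA : HasDerivAt A A' t) (hB : HasDerivAt B B' t) :
    HasDerivAt (fun s => A s * B s) (A t * B' + A' * B t) t :=
  (mulBil n).hasDerivAt_of_bilinear (u := A) (v := B) (fun _ => hA) (fun _ => hB)

lemma rhd_eq {n : ℕ} {P : ℝ → Matrix (Fin n) (Fin n) ℂ} (hP : Continuous P)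
    (Q : ℝ → Matrix (Fin n) (Fin n) ℂ) (t : ℝ) :
    rhd P Q t = (∫ u in (0:ℝ)..t, P u) * Q t - Q t * ∫ u in (0:ℝ)..t, P u := by
  have h := (LinearMap.toContinuousLinearMap (LinearMap.mulRight ℝ (Q t) - LinearMap.mulLeft ℝ (Q t))).intervalIntegral_comp_comm
    (hP.intervalIntegrable (μ := MeasureTheory.volume) 0 t)
  exact h

lemma hasDerivAt_prim {n : ℕ} {P : ℝ → Matrix (Fin n) (Fin n) ℂ} (hP : Continuous P) (t : ℝ) :
    HasDerivAt (fun s => ∫ u in (0:ℝ)..s, P u) (P t) t :=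
  (hP.integral_hasStrictDerivAt 0 t).hasDerivAt

lemma continuous_prim {n : ℕ} {P : ℝ → Matrix (Fin n) (Fin n) ℂ} (hP : Continuous P) :
    Continuous (fun s => ∫ u in (0:ℝ)..s, P u) :=
  continuous_iff_continuousAt.2 fun t => (hasDerivAt_prim hP t).continuousAt

lemma continuous_rhd {n : ℕ} {P Q : ℝ → Matrix (Fin n) (Fin n) ℂ} (hP : Continuous P)
    (hQ : Continuous Q) : Continuous (rhd P Q) := by
  have h : rhd P Q = fun t => (∫ u in (0:ℝ)..t, P u) * Q t - Q t * ∫ u in (0:ℝ)..t, P u :=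
    funext (rhd_eq hP Q)
  rw [h]
  exact ((continuous_prim hP).matrix_mul hQ).sub (hQ.matrix_mul (continuous_prim hP))

lemma integral_rhd_sub {n : ℕ} {F G : ℝ → Matrix (Fin n) (Fin n) ℂ} (hF : Continuous F)
    (hG : Continuous G) (t : ℝ) :
    (∫ u in (0:ℝ)..t, rhd F G u) - (∫ u in (0:ℝ)..t, rhd G F u) =
      (∫ u in (0:ℝ)..t, F u) * (∫ u in (0:ℝ)..t, G u) -
        (∫ u in (0:ℝ)..t, G u) * (∫ u in (0:ℝ)..t, F u) := by
  have c1 := continuous_rhd hF hG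
  have c2 := continuous_rhd hG hF
  rw [← intervalIntegral.integral_sub (c1.intervalIntegrable 0 t) (c2.intervalIntegrable 0 t)]
  have hd : ∀ s ∈ Set.uIcc 0 t, HasDerivAt
      (fun s => (∫ u in (0:ℝ)..s, F u) * (∫ u in (0:ℝ)..s, G u) -
        (∫ u in (0:ℝ)..s, G u) * (∫ u in (0:ℝ)..s, F u)) (rhd F G s - rhd G F s) s := by
    intro s _
    have h := (hasDerivAt_mat_mul (hasDerivAt_prim hF s) (hasDerivAt_prim hG s)).sub
      (hasDerivAt_mat_mul (hasDerivAt_prim hG s) (hasDerivAt_prim hF s))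
    refine h.congr_deriv ?_
    rw [rhd_eq hF, rhd_eq hG]
    abel
  rw [intervalIntegral.integral_eq_sub_of_hasDerivAt hd ((c1.sub c2).intervalIntegrable 0 t)]
  simp

/-- The operation `▷` satisfies the pre-Lie relation
`F ▷ (G ▷ H) − (F ▷ G) ▷ H = G ▷ (F ▷ H) − (G ▷ F) ▷ H`. -/
theorem rhd_preLie {n : ℕ} (F G H : ℝ → Matrix (Fin n) (Fin n) ℂ)
    (hF : Continuous F) (hG : Continuous G) (hH : Continuous H) :
    rhd F (rhd G H) - rhd (rhd F G) H = rhd G (rhd F H) - rhd (rhd G F) H := by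
  funext t
  have key := integral_rhd_sub hF hG t
  rw [Pi.sub_apply, Pi.sub_apply, rhd_eq hF, rhd_eq hG, rhd_eq hG, rhd_eq hF,
    rhd_eq (continuous_rhd hF hG), rhd_eq (continuous_rhd hG hF)]
  rw [sub_eq_iff_eq_add] at key
  rw [key]
  noncomm_ring
end

section
/- Let d ≥ 1 and let P, Q, S : ℝ^d × ℝ → ℝ^d be smooth time-dependent vector fields. Define the binary operation ▷ by (P ▷ Q)(x,t) = ∫₀ᵗ ( ∂ₓP(x,τ) · Q(x,t) − ∂ₓQ(x,t) · P(x,τ) ) dτ, where ∂ₓ denotes the spatial Fréchet differential. Then the pre-Lie relation holds: P ▷ (Q ▷ S) − (P ▷ Q) ▷ S = Q ▷ (P ▷ S) − (Q ▷ P) ▷ S (as equality of maps ℝ^d × ℝ → ℝ^d). -/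
/-- The binary operation of equation (3.8) of the paper on smooth
time-dependent vector fields on `ℝ^d`:
`(P ▷ Q)(x,t) = ∫₀ᵗ (∂ₓP(x,τ)·Q(x,t) − ∂ₓQ(x,t)·P(x,τ)) dτ`. -/
noncomputable def rhdVF {d : ℕ}
    (P Q : EuclideanSpace ℝ (Fin d) × ℝ → EuclideanSpace ℝ (Fin d)) :
    EuclideanSpace ℝ (Fin d) × ℝ → EuclideanSpace ℝ (Fin d) :=
  fun p => ∫ τ in (0:ℝ)..p.2,
    (fderiv ℝ (fun y => P (y, τ)) p.1 (Q p)
      - fderiv ℝ (fun y => Q (y, p.2)) p.1 (P (p.1, τ)))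

open MeasureTheory Set Topology

namespace RhdAux

section gen
variable {H : Type} [NormedAddCommGroup H] [NormedSpace ℝ H] [FiniteDimensional ℝ H]

lemma slice_fderiv {E : Type} [NormedAddCommGroup E] [NormedSpace ℝ E] {F : H × ℝ → E}
    (hF : Differentiable ℝ F) (x : H) (t : ℝ) :
    HasFDerivAt (fun y => F (y, t))
      ((fderiv ℝ F (x, t)).comp (ContinuousLinearMap.inl ℝ H ℝ)) x := by
  have h1 := (hF (x, t)).hasFDerivAt
  exact h1.comp x (hasFDerivAt_prodMk_left x t)

lemma par_hasFDerivAt {E : Type} [NormedAddCommGroup E] [NormedSpace ℝ E]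
    {F : H × ℝ → E} (hF : ContDiff ℝ 1 F) (a b : ℝ) (x : H) :
    HasFDerivAt (fun y => ∫ t in a..b, F (y, t))
      (∫ t in a..b, (fderiv ℝ F (x, t)).comp (ContinuousLinearMap.inl ℝ H ℝ)) x := by
  have hc : Continuous (fderiv ℝ F) := hF.continuous_fderiv (by norm_num)
  have hc' : Continuous (fun p : H × ℝ => (fderiv ℝ F p).comp (ContinuousLinearMap.inl ℝ H ℝ)) := by
    fun_prop
  have hFc := hF.continuous
  have : ProperSpace H := FiniteDimensional.proper ℝ H
  obtain ⟨C, hC⟩ := ((isCompact_closedBall x 1).prod (isCompact_uIcc (a := a) (b := b))).exists_bound_of_continuousOn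
    hc'.continuousOn
  refine intervalIntegral.hasFDerivAt_integral_of_dominated_of_fderiv_le (bound := fun _ => C)
    (F := fun y t => F (y, t))
    (F' := fun y t => (fderiv ℝ F (y, t)).comp (ContinuousLinearMap.inl ℝ H ℝ))
    (Metric.closedBall_mem_nhds x one_pos) ?_ ?_ ?_ ?_ ?_ ?_
  · exact Filter.Eventually.of_forall fun y =>
      (hFc.comp (Continuous.prodMk_right y)).aestronglyMeasurable
  · exact (hFc.comp (Continuous.prodMk_right x)).intervalIntegrable _ _
  · exact (hc'.comp (Continuous.prodMk_right x)).aestronglyMeasurable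
  · exact Filter.Eventually.of_forall fun t ht y hy => hC (y, t) ⟨hy, uIoc_subset_uIcc ht⟩
  · exact intervalIntegrable_const
  · exact Filter.Eventually.of_forall fun t ht y hy =>
      slice_fderiv (hF.differentiable (by norm_num)) y t

lemma par_contDiff (n : ℕ) : ∀ {E : Type} [NormedAddCommGroup E] [NormedSpace ℝ E]
    {F : H × ℝ → E} (_ : ContDiff ℝ n F) (a b : ℝ),
    ContDiff ℝ n (fun y => ∫ t in a..b, F (y, t)) := by
  induction n with
  | zero =>
    intro E _ _ F hF a b
    have hFc := hF.continuous
    refine contDiff_zero.2 ?_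
    exact intervalIntegral.continuous_parametric_intervalIntegral_of_continuous' (f := fun y t => F (y, t)) hFc a b
  | succ n ih =>
    intro E _ _ F hF a b
    have h1 : ContDiff ℝ 1 F := hF.of_le (by simp)
    push_cast at hF ⊢
    refine contDiff_succ_iff_hasFDerivAt.2 ⟨_, ?_, fun x => par_hasFDerivAt h1 a b x⟩
    refine ih (F := fun p => (fderiv ℝ F p).comp (ContinuousLinearMap.inl ℝ H ℝ)) ?_ a b
    have h2 : ContDiff ℝ n (fderiv ℝ F) := hF.fderiv_right le_rfl
    exact h2.clm_comp contDiff_const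

/-- primitive in time -/
noncomputable def prim {E : Type} [NormedAddCommGroup E] [NormedSpace ℝ E] (F : H × ℝ → E) :
    H × ℝ → E := fun p => ∫ t in (0:ℝ)..p.2, F (p.1, t)

lemma prim_contDiff {E : Type} [NormedAddCommGroup E] [NormedSpace ℝ E]
    {F : H × ℝ → E} (hF : ContDiff ℝ (⊤ : ℕ∞) F) : ContDiff ℝ (⊤ : ℕ∞) (prim F) := by
  have h : prim F = fun p : H × ℝ => ∫ s in (0:ℝ)..1, p.2 • F (p.1, p.2 * s) := by
    funext p
    rw [intervalIntegral.integral_smul,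
      intervalIntegral.smul_integral_comp_mul_left (f := fun s => F (p.1, s))]
    simp [prim]
  rw [h]
  refine contDiff_infty.2 fun n => ?_
  have hn : ContDiff ℝ n F := contDiff_infty.1 hF n
  refine par_contDiff n (F := fun q : (H × ℝ) × ℝ => q.1.2 • F (q.1.1, q.1.2 * q.2)) ?_ 0 1
  fun_prop

lemma prim_fderiv {E : Type} [NormedAddCommGroup E] [NormedSpace ℝ E] [CompleteSpace E]
    {F : H × ℝ → E} (hF : ContDiff ℝ (⊤ : ℕ∞) F) (x : H) (t : ℝ) (v : H) :
    fderiv ℝ (fun y => prim F (y, t)) x v = ∫ τ in (0:ℝ)..t, fderiv ℝ (fun y => F (y, τ)) x v := by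
  have h1 : ContDiff ℝ 1 F := contDiff_infty.1 hF 1
  have hc : Continuous (fderiv ℝ F) := h1.continuous_fderiv (by norm_num)
  rw [show (fun y => prim F (y, t)) = fun y => ∫ τ in (0:ℝ)..t, F (y, τ) from rfl,
    (par_hasFDerivAt h1 0 t x).fderiv, ContinuousLinearMap.intervalIntegral_apply]
  · refine intervalIntegral.integral_congr fun τ _ => ?_
    simp only [(slice_fderiv (h1.differentiable (by norm_num)) x τ).fderiv]
  · apply Continuous.intervalIntegrable; fun_prop

lemma slice_contDiff {E : Type} [NormedAddCommGroup E] [NormedSpace ℝ E]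
    {F : H × ℝ → E} (hF : ContDiff ℝ (⊤ : ℕ∞) F) (t : ℝ) :
    ContDiff ℝ (⊤ : ℕ∞) (fun y => F (y, t)) := by fun_prop

lemma dslice_contDiff {E : Type} [NormedAddCommGroup E] [NormedSpace ℝ E]
    {F : H × ℝ → E} (hF : ContDiff ℝ (⊤ : ℕ∞) F) {V : H × ℝ → H} (hV : ContDiff ℝ (⊤ : ℕ∞) V) :
    ContDiff ℝ (⊤ : ℕ∞) (fun p : H × ℝ => fderiv ℝ (fun y => F (y, p.2)) p.1 (V p)) := by
  have hd : Differentiable ℝ F := hF.differentiable (by simp)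
  have h : (fun p : H × ℝ => fderiv ℝ (fun y => F (y, p.2)) p.1 (V p))
      = fun p => fderiv ℝ F p (V p, 0) := by
    funext p
    rw [(slice_fderiv hd p.1 p.2).fderiv]; simp
  rw [h]
  have h2 : ContDiff ℝ (⊤ : ℕ∞) (fderiv ℝ F) := hF.fderiv_right (by simp)
  exact h2.clm_apply (hV.prodMk contDiff_const)

lemma dslice_cont {E : Type} [NormedAddCommGroup E] [NormedSpace ℝ E]
    {F : H × ℝ → E} (hF : ContDiff ℝ (⊤ : ℕ∞) F) (x : H) :
    Continuous (fun t : ℝ => fderiv ℝ (fun y => F (y, t)) x) := by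
  have hd : Differentiable ℝ F := hF.differentiable (by simp)
  have h2 : Continuous (fderiv ℝ F) := hF.continuous_fderiv (by simp)
  simp only [fun t => (slice_fderiv hd x t).fderiv]
  fun_prop

lemma prim_hasDerivAt {E : Type} [NormedAddCommGroup E] [NormedSpace ℝ E] [CompleteSpace E]
    {F : H × ℝ → E} (hF : Continuous F) (x : H) (t : ℝ) :
    HasDerivAt (fun s => prim F (x, s)) (F (x, t)) t := by
  have hc : Continuous (fun s : ℝ => F (x, s)) := by fun_prop
  exact (hc.integral_hasStrictDerivAt 0 t).hasDerivAt

lemma prim_fderiv_hasDerivAt {E : Type} [NormedAddCommGroup E] [NormedSpace ℝ E] [CompleteSpace E]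
    {F : H × ℝ → E} (hF : ContDiff ℝ (⊤ : ℕ∞) F) (x : H) (t : ℝ) :
    HasDerivAt (fun s => fderiv ℝ (fun y => prim F (y, s)) x)
      (fderiv ℝ (fun y => F (y, t)) x) t := by
  have hc := dslice_cont hF x
  have : (fun s => fderiv ℝ (fun y => prim F (y, s)) x)
      = fun s => ∫ τ in (0:ℝ)..s, fderiv ℝ (fun y => F (y, τ)) x := by
    funext s; ext v
    rw [prim_fderiv hF, ContinuousLinearMap.intervalIntegral_apply (hc.intervalIntegrable _ _)]
  rw [this]
  exact (hc.integral_hasStrictDerivAt 0 t).hasDerivAt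

end gen

open VectorField

variable {d : ℕ} {P Q S : EuclideanSpace ℝ (Fin d) × ℝ → EuclideanSpace ℝ (Fin d)}

lemma rhd_eq (hP : ContDiff ℝ (⊤ : ℕ∞) P) (Q : EuclideanSpace ℝ (Fin d) × ℝ → EuclideanSpace ℝ (Fin d)) :
    rhdVF P Q = fun p => fderiv ℝ (fun y => prim P (y, p.2)) p.1 (Q p)
      - fderiv ℝ (fun y => Q (y, p.2)) p.1 (prim P p) := by
  funext p
  have hc := dslice_cont hP p.1
  have hPc := hP.continuous
  have hPc' : Continuous (fun τ : ℝ => P (p.1, τ)) := by fun_prop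
  unfold rhdVF
  rw [intervalIntegral.integral_sub, prim_fderiv hP, prim,
    ContinuousLinearMap.intervalIntegral_comp_comm]
  · exact hPc'.intervalIntegrable _ _
  · apply Continuous.intervalIntegrable; fun_prop
  · apply Continuous.intervalIntegrable; fun_prop

lemma rhd_slice (hP : ContDiff ℝ (⊤ : ℕ∞) P) (Q : EuclideanSpace ℝ (Fin d) × ℝ → EuclideanSpace ℝ (Fin d))
    (t : ℝ) : (fun y => rhdVF P Q (y, t))
      = lieBracket ℝ (fun y => Q (y, t)) (fun y => prim P (y, t)) := by
  rw [rhd_eq hP]; rfl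

lemma rhd_contDiff (hP : ContDiff ℝ (⊤ : ℕ∞) P) (hQ : ContDiff ℝ (⊤ : ℕ∞) Q) :
    ContDiff ℝ (⊤ : ℕ∞) (rhdVF P Q) := by
  rw [rhd_eq hP]
  exact (dslice_contDiff (prim_contDiff hP) hQ).sub (dslice_contDiff hQ (prim_contDiff hP))

lemma prim_rhd (hP : ContDiff ℝ (⊤ : ℕ∞) P) (hQ : ContDiff ℝ (⊤ : ℕ∞) Q)
    (x : EuclideanSpace ℝ (Fin d)) (t : ℝ) :
    prim (rhdVF P Q) (x, t) - prim (rhdVF Q P) (x, t)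
      = lieBracket ℝ (fun y => prim Q (y, t)) (fun y => prim P (y, t)) x := by
  have key : ∀ s, HasDerivAt
      (fun s => lieBracket ℝ (fun y => prim Q (y, s)) (fun y => prim P (y, s)) x)
      (rhdVF P Q (x, s) - rhdVF Q P (x, s)) s := by
    intro s
    have h1 := (prim_fderiv_hasDerivAt hP x s).clm_apply (prim_hasDerivAt hQ.continuous x s)
    have h2 := (prim_fderiv_hasDerivAt hQ x s).clm_apply (prim_hasDerivAt hP.continuous x s)
    refine (h1.sub h2).congr_deriv ?_
    rw [rhd_eq hP, rhd_eq hQ]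
    simp only
    abel
  have c1 : Continuous fun s : ℝ => rhdVF P Q (x, s) := by
    have := (rhd_contDiff hP hQ).continuous
    fun_prop
  have c2 : Continuous fun s : ℝ => rhdVF Q P (x, s) := by
    have := (rhd_contDiff hQ hP).continuous
    fun_prop
  have := intervalIntegral.integral_eq_sub_of_hasDerivAt (a := 0) (b := t) (fun s _ => key s)
    ((c1.sub c2).intervalIntegrable _ _)
  rw [intervalIntegral.integral_sub (c1.intervalIntegrable _ _) (c2.intervalIntegrable _ _)] at this
  simp only [prim] at this ⊢
  rw [this]
  simp [lieBracket]

end RhdAux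

open RhdAux VectorField

/-- The pre-Lie relation
`P ▷ (Q ▷ S) − (P ▷ Q) ▷ S = Q ▷ (P ▷ S) − (Q ▷ P) ▷ S`
for the operation `▷` on smooth time-dependent vector fields on `ℝ^d`. -/
theorem rhdVF_preLie (d : ℕ) (hd : 1 ≤ d)
    (P Q S : EuclideanSpace ℝ (Fin d) × ℝ → EuclideanSpace ℝ (Fin d))
    (hP : ContDiff ℝ (⊤ : ℕ∞) P) (hQ : ContDiff ℝ (⊤ : ℕ∞) Q) (hS : ContDiff ℝ (⊤ : ℕ∞) S) :
    rhdVF P (rhdVF Q S) - rhdVF (rhdVF P Q) S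
      = rhdVF Q (rhdVF P S) - rhdVF (rhdVF Q P) S := by

  funext ⟨x, t⟩
  have hIP := slice_contDiff (prim_contDiff hP) t
  have hIQ := slice_contDiff (prim_contDiff hQ) t
  have hPQ := rhd_contDiff hP hQ
  have hQP := rhd_contDiff hQ hP
  have hSt := slice_contDiff hS t
  have e1 := congrFun (rhd_slice hP (rhdVF Q S) t) x
  have e2 := congrFun (rhd_slice hPQ S t) x
  have e3 := congrFun (rhd_slice hQ (rhdVF P S) t) x
  have e4 := congrFun (rhd_slice hQP S t) x
  rw [rhd_slice hQ] at e1
  rw [rhd_slice hP] at e3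
  simp only [Pi.sub_apply]
  rw [e1, e2, e3, e4]
  have hd1 : DifferentiableAt ℝ (fun y => prim (rhdVF Q P) (y, t)) x :=
    (slice_contDiff (prim_contDiff hQP) t).differentiable (by simp) x
  have hbr : (fun y => prim (rhdVF P Q) (y, t)) = (fun y => prim (rhdVF Q P) (y, t))
      + lieBracket ℝ (fun y => prim Q (y, t)) (fun y => prim P (y, t)) := by
    funext y
    rw [Pi.add_apply, ← prim_rhd hP hQ]; abel
  have hd2 : DifferentiableAt ℝ
      (lieBracket ℝ (fun y => prim Q (y, t)) (fun y => prim P (y, t))) x := by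
    have : lieBracket ℝ (fun y => prim Q (y, t)) (fun y => prim P (y, t))
        = (fun y => prim (rhdVF P Q) (y, t)) - (fun y => prim (rhdVF Q P) (y, t)) := by
      rw [hbr]; abel
    rw [this]
    exact ((slice_contDiff (prim_contDiff hPQ) t).differentiable (by simp) x).sub hd1
  rw [hbr, lieBracket_add_right hd1 hd2]
  have J := leibniz_identity_lieBracket (𝕜 := ℝ) (n := (2 : ℕ)) (by simp)
    ((contDiff_infty.1 hSt 2).contDiffAt (x := x)) ((contDiff_infty.1 hIQ 2).contDiffAt (x := x))
    ((contDiff_infty.1 hIP 2).contDiffAt (x := x))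
  rw [J, lieBracket_swap (V := fun y => prim Q (y, t)) (W := lieBracket ℝ _ _)]
  abel
end

section
/- Let A : ℝ → Matrix n n ℂ be continuous. Then for all t ∈ ℝ: ∫₀ᵗ ( (1/4)((A ▷ A) ▷ A)(τ) + (1/12)(A ▷ (A ▷ A))(τ) ) dτ = (1/3) ∫₀ᵗ ∫₀^{t₁} ∫₀^{t₂} [A(t₁), [A(t₂), A(t₃)]] dt₃ dt₂ dt₁ − (1/6) ∫₀ᵗ ∫₀^{t₁} ∫₀^{t₂} [A(t₂), [A(t₁), A(t₃)]] dt₃ dt₂ dt₁. -/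
attribute [local instance] Matrix.normedAddCommGroup Matrix.normedSpace

/-- The commutator `[X,Y] = XY − YX` of matrices. -/
noncomputable def mcomm {n : ℕ} (X Y : Matrix (Fin n) (Fin n) ℂ) : Matrix (Fin n) (Fin n) ℂ :=
  X * Y - Y * X

lemma mg_integral_mulLeft {n : ℕ} (M : Matrix (Fin n) (Fin n) ℂ)
    (f : ℝ → Matrix (Fin n) (Fin n) ℂ) (hf : Continuous f) (a b : ℝ) :
    (∫ u in a..b, mcomm M (f u)) = mcomm M (∫ u in a..b, f u) := by
  have h := ((LinearMap.mulLeft ℂ M - LinearMap.mulRight ℂ M).toContinuousLinearMap).intervalIntegral_comp_comm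
    (hf.intervalIntegrable (μ := MeasureTheory.volume) a b)
  exact h

lemma mg_hasDerivAt_mul {n : ℕ} {f g : ℝ → Matrix (Fin n) (Fin n) ℂ}
    {f' g' : Matrix (Fin n) (Fin n) ℂ} {x : ℝ}
    (hf : HasDerivAt f f' x) (hg : HasDerivAt g g' x) :
    HasDerivAt (fun s => f s * g s) (f' * g x + f x * g') x := by
  have hf2 : ∀ i j, HasDerivAt (fun s => f s i j) (f' i j) x := fun i j =>
    hasDerivAt_pi.1 (hasDerivAt_pi.1 hf i) j
  have hg2 : ∀ i j, HasDerivAt (fun s => g s i j) (g' i j) x := fun i j =>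
    hasDerivAt_pi.1 (hasDerivAt_pi.1 hg i) j
  refine hasDerivAt_pi.2 fun i => hasDerivAt_pi.2 fun j => ?_
  simp only [Matrix.add_apply, Matrix.mul_apply, ← Finset.sum_add_distrib]
  exact HasDerivAt.fun_sum fun k _ => (hf2 i k).mul (hg2 k j)

lemma mg_hasDerivAt_mcomm {n : ℕ} {f g : ℝ → Matrix (Fin n) (Fin n) ℂ}
    {f' g' : Matrix (Fin n) (Fin n) ℂ} {x : ℝ}
    (hf : HasDerivAt f f' x) (hg : HasDerivAt g g' x) :
    HasDerivAt (fun s => mcomm (f s) (g s)) (mcomm f' (g x) + mcomm (f x) g') x := by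
  have := (mg_hasDerivAt_mul hf hg).sub (mg_hasDerivAt_mul hg hf)
  refine this.congr_deriv ?_
  simp only [mcomm]; abel

lemma mg_continuous_mcomm {X : Type*} [TopologicalSpace X] {n : ℕ}
    {f g : X → Matrix (Fin n) (Fin n) ℂ}
    (hf : Continuous f) (hg : Continuous g) : Continuous (fun s => mcomm (f s) (g s)) :=
  (hf.matrix_mul hg).sub (hg.matrix_mul hf)

lemma mg_mcomm_neg {n : ℕ} (X Y : Matrix (Fin n) (Fin n) ℂ) : mcomm X Y = - mcomm Y X := by
  simp [mcomm]

lemma mg_rhd {n : ℕ} (P Q : ℝ → Matrix (Fin n) (Fin n) ℂ) (hP : Continuous P) (t : ℝ) :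
    rhd P Q t = mcomm (∫ u in (0:ℝ)..t, P u) (Q t) := by
  rw [mg_mcomm_neg, ← mg_integral_mulLeft _ _ hP, ← intervalIntegral.integral_neg]
  simp [rhd, mcomm]

/-- The third Magnus term `Ω₃(t) = ∫₀ᵗ ((1/4)(A▷A)▷A + (1/12)A▷(A▷A))(τ) dτ`
coincides with the permutation/descent formula (2.16) of the paper for `n = 3`. -/
theorem magnus_Omega3_iterated_integral {n : ℕ}
    (A : ℝ → Matrix (Fin n) (Fin n) ℂ) (hA : Continuous A) :
    ∀ t : ℝ,
      (∫ τ in (0:ℝ)..t,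
          ((1/4 : ℂ) • rhd (rhd A A) A τ + (1/12 : ℂ) • rhd A (rhd A A) τ))
      = (1/3 : ℂ) • (∫ t₁ in (0:ℝ)..t, ∫ t₂ in (0:ℝ)..t₁, ∫ t₃ in (0:ℝ)..t₂,
            mcomm (A t₁) (mcomm (A t₂) (A t₃)))
        - (1/6 : ℂ) • (∫ t₁ in (0:ℝ)..t, ∫ t₂ in (0:ℝ)..t₁, ∫ t₃ in (0:ℝ)..t₂,
            mcomm (A t₂) (mcomm (A t₁) (A t₃))) := by
  intro t
  set B : ℝ → Matrix (Fin n) (Fin n) ℂ := fun s => ∫ u in (0:ℝ)..s, A u with hB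
  have hBd : ∀ s, HasDerivAt B (A s) s := fun s => hA.integral_hasStrictDerivAt 0 s |>.hasDerivAt
  have hBc : Continuous B := continuous_iff_continuousAt.2 fun s => (hBd s).continuousAt
  have hAA : rhd A A = fun s => mcomm (B s) (A s) := funext fun s => mg_rhd A A hA s
  have hAAc : Continuous (rhd A A) := by rw [hAA]; exact mg_continuous_mcomm hBc hA
  have e1 : ∀ t₁, (∫ t₂ in (0:ℝ)..t₁, ∫ t₃ in (0:ℝ)..t₂, mcomm (A t₁) (mcomm (A t₂) (A t₃)))
      = ∫ s in (0:ℝ)..t₁, mcomm (A t₁) (mcomm (A s) (B s)) := by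
    intro t₁
    refine intervalIntegral.integral_congr fun s _ => ?_
    rw [mg_integral_mulLeft _ _ (mg_continuous_mcomm continuous_const hA),
      mg_integral_mulLeft _ _ hA]
  have e2 : ∀ t₁, (∫ t₂ in (0:ℝ)..t₁, ∫ t₃ in (0:ℝ)..t₂, mcomm (A t₂) (mcomm (A t₁) (A t₃)))
      = ∫ s in (0:ℝ)..t₁, mcomm (A s) (mcomm (A t₁) (B s)) := by
    intro t₁
    refine intervalIntegral.integral_congr fun s _ => ?_
    rw [mg_integral_mulLeft _ _ (mg_continuous_mcomm continuous_const hA),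
      mg_integral_mulLeft _ _ hA]
  simp only [e1, e2]
  have c1 : Continuous fun t₁ => ∫ s in (0:ℝ)..t₁, mcomm (A t₁) (mcomm (A s) (B s)) := by
    refine intervalIntegral.continuous_parametric_intervalIntegral_of_continuous
      (f := fun t₁ s => mcomm (A t₁) (mcomm (A s) (B s))) ?_ continuous_id
    exact mg_continuous_mcomm (hA.comp continuous_fst)
      (mg_continuous_mcomm (hA.comp continuous_snd) (hBc.comp continuous_snd))
  have c2 : Continuous fun t₁ => ∫ s in (0:ℝ)..t₁, mcomm (A s) (mcomm (A t₁) (B s)) := by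
    refine intervalIntegral.continuous_parametric_intervalIntegral_of_continuous
      (f := fun t₁ s => mcomm (A s) (mcomm (A t₁) (B s))) ?_ continuous_id
    exact mg_continuous_mcomm (hA.comp continuous_snd)
      (mg_continuous_mcomm (hA.comp continuous_fst) (hBc.comp continuous_snd))
  have d1 : Continuous fun t₁ => (1/3 : ℂ) • ∫ s in (0:ℝ)..t₁, mcomm (A t₁) (mcomm (A s) (B s)) :=
    c1.const_smul (1/3 : ℂ)
  have d2 : Continuous fun t₁ => (1/6 : ℂ) • ∫ s in (0:ℝ)..t₁, mcomm (A s) (mcomm (A t₁) (B s)) :=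
    c2.const_smul (1/6 : ℂ)
  rw [← intervalIntegral.integral_smul, ← intervalIntegral.integral_smul,
    ← intervalIntegral.integral_sub (d1.intervalIntegrable _ _) (d2.intervalIntegrable _ _)]
  refine intervalIntegral.integral_congr fun r _ => ?_
  have h1 : rhd (rhd A A) A r = ∫ s in (0:ℝ)..r, mcomm (A r) (mcomm (A s) (B s)) := by
    rw [mg_rhd _ _ hAAc, mg_mcomm_neg, ← mg_integral_mulLeft _ _ hAAc,
      ← intervalIntegral.integral_neg]
    refine intervalIntegral.integral_congr fun s _ => ?_
    simp only [hAA, mcomm]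
    noncomm_ring
  have k1 : Continuous fun s => mcomm (A r) (mcomm (A s) (B s)) :=
    mg_continuous_mcomm continuous_const (mg_continuous_mcomm hA hBc)
  have k2 : Continuous fun s => mcomm (A s) (mcomm (A r) (B s)) :=
    mg_continuous_mcomm hA (mg_continuous_mcomm continuous_const hBc)
  have k3 : Continuous fun s => (2:ℂ) • mcomm (A s) (mcomm (A r) (B s)) := k2.const_smul (2:ℂ)
  have h2 : rhd A (rhd A A) r = (∫ s in (0:ℝ)..r, mcomm (A r) (mcomm (A s) (B s)))
      - (2:ℂ) • ∫ s in (0:ℝ)..r, mcomm (A s) (mcomm (A r) (B s)) := by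
    rw [mg_rhd _ _ hA, hAA, ← intervalIntegral.integral_smul,
      ← intervalIntegral.integral_sub (k1.intervalIntegrable _ _)
        (k3.intervalIntegrable _ _)]
    have hd : ∀ s, HasDerivAt (fun s => mcomm (B s) (mcomm (B s) (A r)))
        (mcomm (A r) (mcomm (A s) (B s)) - (2:ℂ) • mcomm (A s) (mcomm (A r) (B s))) s := by
      intro s
      have := mg_hasDerivAt_mcomm (hBd s) (mg_hasDerivAt_mcomm (hBd s) (hasDerivAt_const s (A r)))
      refine this.congr_deriv ?_
      simp only [mcomm, two_smul]
      noncomm_ring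
    rw [intervalIntegral.integral_eq_sub_of_hasDerivAt (fun s _ => hd s)
      ((k1.sub k3).intervalIntegrable _ _)]
    simp [hB, mcomm]
  rw [h1, h2]
  module
end

section
/- Let ε > 0 and let X : [0,∞) → ℝ² be differentiable with X'(t) = −ε ((‖X(t)‖² − 4)/8) X(t) for all t ≥ 0, and suppose X(0) ≠ 0. Then ‖X(t)‖² → 4 as t → ∞. -/
open Filter

/-- Every nonzero solution of the first-order averaged Van der Pol system
`X' = −ε((‖X‖² − 4)/8) X` (with `ε > 0`, Euclidean norm on `ℝ²`) converges to
the limit cycle `‖X‖² = 4`. -/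
theorem vdp_averaged_limit_cycle (ε : ℝ) (hε : 0 < ε)
    (X : ℝ → EuclideanSpace ℝ (Fin 2))
    (hX : ∀ t : ℝ, 0 ≤ t → HasDerivAt X (-(ε * ((‖X t‖ ^ 2 - 4) / 8)) • X t) t)
    (h0 : X 0 ≠ 0) :
    Tendsto (fun t => ‖X t‖ ^ 2) atTop (nhds 4) := by
  obtain ⟨r, hr⟩ : ∃ r : ℝ → ℝ, r = fun t => ‖X t‖ ^ 2 := ⟨_, rfl⟩
  have hrd : ∀ t : ℝ, 0 ≤ t → HasDerivAt r (-(ε / 4) * (r t - 4) * r t) t := by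
    intro t ht
    have h := (hX t ht).norm_sq
    rw [hr]
    convert h using 1
    rw [inner_smul_right, real_inner_self_eq_norm_sq]
    ring
  have hrn : ∀ t, 0 ≤ r t := by
    intro t
    rw [hr]
    positivity
  have hr0 : r 0 ≠ 0 := by
    rw [hr]
    simpa using h0
  rw [← hr]
  obtain ⟨C, hC⟩ : ∃ C : ℝ, C = 4 / r 0 - 1 := ⟨_, rfl⟩
  have hEd : ∀ t : ℝ, HasDerivAt (fun t => Real.exp (-(ε * t))) (-ε * Real.exp (-(ε * t))) t := by
    intro t
    have h := (((hasDerivAt_id t).const_mul ε).neg).exp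
    refine HasDerivAt.congr_deriv (f := fun t => Real.exp (-(ε * t))) h ?_
    change Real.exp (-(ε * t)) * -(ε * 1) = _
    ring
  obtain ⟨W, hW⟩ : ∃ W : ℝ → ℝ, W = fun t => r t * (1 + C * Real.exp (-(ε * t))) - 4 := ⟨_, rfl⟩
  have hWd : ∀ t : ℝ, 0 ≤ t → HasDerivAt W (-(ε / 4) * r t * W t) t := by
    intro t ht
    have h := ((hrd t ht).mul (((hEd t).const_mul C).const_add 1)).sub_const 4
    rw [hW]
    refine HasDerivAt.congr_deriv
      (f := fun t => r t * (1 + C * Real.exp (-(ε * t))) - 4) h ?_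
    ring
  have hVd : ∀ t : ℝ, 0 ≤ t → HasDerivAt (fun t => W t ^ 2) (-(ε / 2) * r t * W t ^ 2) t := by
    intro t ht
    have h := (hWd t ht).pow 2
    refine HasDerivAt.congr_deriv (f := fun t => W t ^ 2) h ?_
    push_cast
    ring
  have hanti : AntitoneOn (fun t => W t ^ 2) (Set.Ici 0) := by
    apply antitoneOn_of_deriv_nonpos (convex_Ici 0)
    · exact fun t ht => (hVd t ht).continuousAt.continuousWithinAt
    · exact fun t ht => (hVd t (interior_subset ht)).differentiableAt.differentiableWithinAt
    · intro t ht
      rw [(hVd t (interior_subset ht)).deriv]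
      have := mul_nonneg (mul_nonneg hε.le (hrn t)) (sq_nonneg (W t))
      linarith
  have hW0 : W 0 = 0 := by
    rw [hW, hC]
    simp
    field_simp
    simp
  have hWz : ∀ t, 0 ≤ t → W t = 0 := by
    intro t ht
    have h : W t ^ 2 ≤ W 0 ^ 2 := hanti (Set.mem_Ici.2 le_rfl) ht ht
    rw [hW0] at h
    nlinarith [sq_nonneg (W t)]
  have hlim : Tendsto (fun t => 1 + C * Real.exp (-(ε * t))) atTop (nhds 1) := by
    have h : Tendsto (fun t => Real.exp (-(ε * t))) atTop (nhds 0) :=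
      Real.tendsto_exp_neg_atTop_nhds_zero.comp (tendsto_id.const_mul_atTop hε)
    simpa using (h.const_mul C).const_add 1
  have hfin : Tendsto (fun t => 4 / (1 + C * Real.exp (-(ε * t)))) atTop (nhds 4) := by
    have h := (tendsto_const_nhds (x := (4 : ℝ))).div hlim one_ne_zero
    rw [div_one] at h
    exact h
  refine hfin.congr' ?_
  filter_upwards [eventually_ge_atTop 0] with t ht
  have h := hWz t ht
  rw [hW] at h
  have h' : r t * (1 + C * Real.exp (-(ε * t))) = 4 := by linarith
  have hne : 1 + C * Real.exp (-(ε * t)) ≠ 0 := by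
    intro hz
    rw [hz] at h'
    norm_num at h'
  rw [div_eq_iff hne, h']
end

section
/- For every X = (X₁, X₂) ∈ ℝ², −(1/(4π)) ∫₀^{2π} ∫₀^{t} ( ξ_t(X) (∇ξ_τ(X) · V_t) V_τ − ξ_τ(X) (∇ξ_t(X) · V_τ) V_t ) dτ dt = (1/256) ( −X₂ (32 − 24X₂² + 5X₂⁴ − 88X₁² + 21X₁⁴ + 10X₁²X₂²), X₁ (21X₁⁴ + 32 − 88X₁² + 40X₂² + 10X₁²X₂² + 5X₂⁴) ), where ∇ξ_t(X) denotes the gradient of x ↦ ξ_t(x) at X and · the Euclidean inner product on ℝ². -/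
open Real

/-- The rotating vector `V_t = (−sin t, cos t)` of the Van der Pol system. -/
noncomputable def vdpV (t : ℝ) : ℝ × ℝ := (-sin t, cos t)

/-- The scalar factor `ξ_t(x) = (1 − (cos t·x₁ + sin t·x₂)²)(−sin t·x₁ + cos t·x₂)`. -/
noncomputable def vdpXi (t : ℝ) (x : ℝ × ℝ) : ℝ :=
  (1 - (cos t * x.1 + sin t * x.2) ^ 2) * (-sin t * x.1 + cos t * x.2)


/-- Trigonometric polynomial with harmonics 0, 2, 4. -/
noncomputable def vF (a : Fin 5 → ℝ) (t : ℝ) : ℝ :=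
  a 0 + a 1 * cos (2*t) + a 2 * sin (2*t) + a 3 * cos (4*t) + a 4 * sin (4*t)

/-- Primitive of `vF` vanishing at zero. -/
noncomputable def vI (b : Fin 5 → ℝ) (t : ℝ) : ℝ :=
  b 0 * t + b 1 * sin (2*t) / 2 + b 2 * (1 - cos (2*t)) / 2 + b 3 * sin (4*t) / 4
    + b 4 * (1 - cos (4*t)) / 4

/-- Primitive of `vF a * vI b`. -/
noncomputable def vO (a b : Fin 5 → ℝ) (t : ℝ) : ℝ :=
  b 0 * (a 0 * (t^2/2) + a 1 * (t * sin (2*t)/2 + cos (2*t)/4)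
    + a 2 * (-(t * cos (2*t))/2 + sin (2*t)/4)
    + a 3 * (t * sin (4*t)/4 + cos (4*t)/16) + a 4 * (-(t * cos (4*t))/4 + sin (4*t)/16))
  + (b 2/2 + b 4/4) * vI a t
  + b 1/2 * (a 0 * (-cos (2*t)/2) + a 1 * (-cos (4*t)/8) + a 2 * (t/2 - sin (4*t)/8)
    + a 3 * (-cos (2*t)^3/3 + cos (2*t)/2) + a 4 * (sin (2*t)^3/3))
  - b 2/2 * (a 0 * (sin (2*t)/2) + a 1 * (t/2 + sin (4*t)/8) + a 2 * (-cos (4*t)/8)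
    + a 3 * (sin (2*t)/2 - sin (2*t)^3/3) + a 4 * (-cos (2*t)^3/3))
  + b 3/4 * (a 0 * (-cos (4*t)/4) + a 1 * (-cos (2*t)^3/3) + a 2 * (sin (2*t)^3/3)
    + a 3 * (sin (4*t)^2/8) + a 4 * (t/2 - sin (4*t)*cos (4*t)/8))
  - b 4/4 * (a 0 * (sin (4*t)/4) + a 1 * (sin (2*t)/2 - sin (2*t)^3/3)
    + a 2 * (-cos (2*t)^3/3 + cos (2*t)/2)
    + a 3 * (t/2 + sin (4*t)*cos (4*t)/8) + a 4 * (sin (4*t)^2/8))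

lemma vcos (k t : ℝ) : HasDerivAt (fun t => cos (k*t)) (-(k * sin (k*t))) t := by
  have := ((hasDerivAt_id' t).const_mul k).cos
  convert this using 1
  simp; ring

lemma vsin (k t : ℝ) : HasDerivAt (fun t => sin (k*t)) (k * cos (k*t)) t := by
  have := ((hasDerivAt_id' t).const_mul k).sin
  convert this using 1
  simp; ring

lemma vs4 (t : ℝ) : sin (4*t) = 2 * sin (2*t) * cos (2*t) := by
  rw [← sin_two_mul]; ring_nf

lemma vc4 (t : ℝ) : cos (4*t) = 2 * cos (2*t)^2 - 1 := by
  rw [← cos_two_mul]; ring_nf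

lemma vI_deriv (b : Fin 5 → ℝ) (t : ℝ) : HasDerivAt (vI b) (vF b t) t := by
  have c1 := vcos 2 t
  have s1 := vsin 2 t
  have c2 := vcos 4 t
  have s2 := vsin 4 t
  have := (((((hasDerivAt_id t).const_mul (b 0)).add ((s1.const_mul (b 1)).div_const 2)).add
    (((c1.const_sub 1).const_mul (b 2)).div_const 2)).add
    ((s2.const_mul (b 3)).div_const 4)).add (((c2.const_sub 1).const_mul (b 4)).div_const 4)
  refine this.congr_deriv ?_
  simp only [vF]; ring

lemma vO_deriv (a b : Fin 5 → ℝ) (t : ℝ) : HasDerivAt (vO a b) (vF a t * vI b t) t := by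
  have c1 := vcos 2 t
  have s1 := vsin 2 t
  have c2 := vcos 4 t
  have s2 := vsin 4 t
  have i := hasDerivAt_id' t
  have h1 := (((((i.pow 2).div_const 2).const_mul (a 0)).add
    ((((i.mul s1).div_const 2).add (c1.div_const 4)).const_mul (a 1))).add
    ((((i.mul c1).neg.div_const 2).add (s1.div_const 4)).const_mul (a 2))).add
    ((((i.mul s2).div_const 4).add (c2.div_const 16)).const_mul (a 3)) |>.add
    ((((i.mul c2).neg.div_const 4).add (s2.div_const 16)).const_mul (a 4)) |>.const_mul (b 0)
  have A := (c1.neg.div_const 2)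
  have e11 := (c2.neg.div_const 8)
  have ess := ((i.div_const 2).sub (s2.div_const 8))
  have ecc := ((i.div_const 2).add (s2.div_const 8))
  have esc2 := (((c1.pow 3).neg.div_const 3).add (c1.div_const 2))
  have es1s2 := ((s1.pow 3).div_const 3)
  have ec1s2 := ((c1.pow 3).neg.div_const 3)
  have ec1c2 := ((s1.div_const 2).sub ((s1.pow 3).div_const 3))
  have es2c2 := ((s2.pow 2).div_const 8)
  have ess2 := ((i.div_const 2).sub ((s2.mul c2).div_const 8))
  have ecc2 := ((i.div_const 2).add ((s2.mul c2).div_const 8))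
  have g2 := (vI_deriv a t).const_mul (b 2/2 + b 4/4)
  have g3 := ((((A.const_mul (a 0)).add (e11.const_mul (a 1))).add (ess.const_mul (a 2))).add
    (esc2.const_mul (a 3))).add (es1s2.const_mul (a 4)) |>.const_mul (b 1/2)
  have g4 := (((((s1.div_const 2).const_mul (a 0)).add (ecc.const_mul (a 1))).add
    (e11.const_mul (a 2))).add
    (ec1c2.const_mul (a 3))).add (ec1s2.const_mul (a 4)) |>.const_mul (b 2/2)
  have g5 := (((((c2.neg.div_const 4).const_mul (a 0)).add (ec1s2.const_mul (a 1))).add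
    (es1s2.const_mul (a 2))).add
    (es2c2.const_mul (a 3))).add (ess2.const_mul (a 4)) |>.const_mul (b 3/4)
  have g6 := (((((s2.div_const 4).const_mul (a 0)).add (ec1c2.const_mul (a 1))).add
    (esc2.const_mul (a 2))).add
    (ecc2.const_mul (a 3))).add (es2c2.const_mul (a 4)) |>.const_mul (b 4/4)
  have := ((((h1.add g2).add g3).sub g4).add g5).sub g6
  refine this.congr_deriv ?_
  have hs : sin (2*t)^2 = 1 - cos (2*t)^2 := by rw [sin_sq]
  have k1 : sin (2*t) * cos (2*t) = sin (4*t)/2 := by rw [vs4]; ring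
  have k2 : cos (2*t)^2 = (1 + cos (4*t))/2 := by rw [vc4]; ring
  have k3 : sin (2*t)^2 = (1 - cos (4*t))/2 := by rw [hs, k2]; ring
  have k4 : sin (4*t)^2 = 1 - cos (4*t)^2 := by rw [sin_sq]
  simp only [vF, vI]
  clear this h1 g2 g3 g4 g5 g6 A e11 ess ecc esc2 es1s2 ec1s2 ec1c2 es2c2 ess2 ecc2 c1 s1 c2 s2 i
  generalize sin (2*t) = S at *
  generalize cos (2*t) = C at *
  generalize sin (4*t) = S2 at *
  generalize cos (4*t) = C2 at *
  have k5 : C * S2 = 2 * C^2 * S := by linear_combination (-2*C)*k1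
  have k6 : S * S2 = 2 * S^2 * C := by linear_combination (-2*S)*k1
  have k7 : C * C2 = C - 2*S^2*C := by linear_combination (2*C)*k3
  have k8 : S * C2 = 2*C^2*S - S := by linear_combination (-2*S)*k2
  simp
  linear_combination (-b 1/2) * (a 1 * k1 + a 2 * k3 + a 3 * k8 + a 4 * k6)
    + (b 2/2) * (a 1 * k2 + a 2 * k1 + a 3 * k7 + a 4 * k5)
    - (b 3/4) * (a 1 * k5 + a 2 * k6 + a 4 / 2 * k4)
    + (b 4/4) * (a 1 * k7 + a 2 * k8 + a 3 / 2 * k4)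

lemma vF_cont (a : Fin 5 → ℝ) : Continuous (vF a) := by
  unfold vF; fun_prop

lemma vI_cont (a : Fin 5 → ℝ) : Continuous (vI a) := by
  unfold vI; fun_prop

/-- Product of two trigonometric polynomials with harmonics 0, 2. -/
noncomputable def vP (m p q α β γ : ℝ) : Fin 5 → ℝ :=
  ![m*α + p*β/2 + q*γ/2, m*β + p*α, m*γ + q*α, p*β/2 - q*γ/2, (p*γ + q*β)/2]

lemma vP_eq (m p q α β γ t : ℝ) : vF (vP m p q α β γ) t =
    (m + p * cos (2*t) + q * sin (2*t)) * (α + β * cos (2*t) + γ * sin (2*t)) := by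
  have hs : sin (2*t)^2 = 1 - cos (2*t)^2 := by rw [sin_sq]
  simp [vF, vP, vs4, vc4]
  linear_combination (-q*γ)*hs

lemma vF_add (a b : Fin 5 → ℝ) (t : ℝ) : vF (a + b) t = vF a t + vF b t := by
  simp [vF]; ring

/-- Coefficients of `ξ · (-sin)`. -/
noncomputable def pU (x y : ℝ) := vP (1-(x^2+y^2)/2) (-(x^2-y^2)/2) (-x*y) (x/2) (-x/2) (-y/2)
/-- Coefficients of `ξ · cos`. -/
noncomputable def pW (x y : ℝ) := vP (1-(x^2+y^2)/2) (-(x^2-y^2)/2) (-x*y) (y/2) (y/2) (-x/2)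
/-- Coefficients of `∂₁ξ · (-sin)`. -/
noncomputable def dU1 (x y : ℝ) := vP (-x) (-x) (-y) (x/2) (-x/2) (-y/2)
  + vP (1-(x^2+y^2)/2) (-(x^2-y^2)/2) (-x*y) (1/2) (-1/2) 0
/-- Coefficients of `∂₁ξ · cos`. -/
noncomputable def dW1 (x y : ℝ) := vP (-x) (-x) (-y) (y/2) (y/2) (-x/2)
  + vP (1-(x^2+y^2)/2) (-(x^2-y^2)/2) (-x*y) 0 0 (-1/2)
/-- Coefficients of `∂₂ξ · (-sin)`. -/
noncomputable def dU2 (x y : ℝ) := vP (-y) y (-x) (x/2) (-x/2) (-y/2)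
  + vP (1-(x^2+y^2)/2) (-(x^2-y^2)/2) (-x*y) 0 0 (-1/2)
/-- Coefficients of `∂₂ξ · cos`. -/
noncomputable def dW2 (x y : ℝ) := vP (-y) y (-x) (y/2) (y/2) (-x/2)
  + vP (1-(x^2+y^2)/2) (-(x^2-y^2)/2) (-x*y) (1/2) (1/2) 0

/-- Partial derivatives. -/
noncomputable def g1 (t x y : ℝ) : ℝ := -2*(cos t*x+sin t*y)*cos t*(-sin t*x+cos t*y)
  + (1-(cos t*x+sin t*y)^2)*(-sin t)
/-- Partial derivatives. -/
noncomputable def g2 (t x y : ℝ) : ℝ := -2*(cos t*x+sin t*y)*sin t*(-sin t*x+cos t*y)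
  + (1-(cos t*x+sin t*y)^2)*(cos t)

lemma vhalf (t x y : ℝ) :
   (1 - (cos t*x+sin t*y)^2 = (1-(x^2+y^2)/2) + (-(x^2-y^2)/2) * cos (2*t) + (-x*y) * sin (2*t)) ∧
   ((-sin t*x+cos t*y) * (-sin t) = x/2 + (-x/2) * cos (2*t) + (-y/2) * sin (2*t)) ∧
   ((-sin t*x+cos t*y) * cos t = y/2 + (y/2) * cos (2*t) + (-x/2) * sin (2*t)) ∧
   (-2*(cos t*x+sin t*y)*cos t = -x + (-x) * cos (2*t) + (-y) * sin (2*t)) ∧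
   (-2*(cos t*x+sin t*y)*sin t = -y + y * cos (2*t) + (-x) * sin (2*t)) ∧
   (-sin t * -sin t = 1/2 + (-1/2) * cos (2*t) + 0 * sin (2*t)) ∧
   (-sin t * cos t = 0 + 0 * cos (2*t) + (-1/2) * sin (2*t)) ∧
   (cos t * cos t = 1/2 + (1/2) * cos (2*t) + 0 * sin (2*t)) := by
  have h : sin t^2 = 1 - cos t^2 := by rw [sin_sq]
  rw [sin_two_mul, cos_two_mul]
  refine ⟨?_, ?_, ?_, ?_, ?_, ?_, ?_, ?_⟩
  · linear_combination (-y^2)*h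
  · linear_combination x*h
  · ring
  · ring
  · linear_combination (-2*y)*h
  · linear_combination h
  · ring
  · ring

lemma e_pU (t x y : ℝ) : vdpXi t (x,y) * (-sin t) = vF (pU x y) t := by
  obtain ⟨h1,h2,h3,h4,h5,h6,h7,h8⟩ := vhalf t x y
  rw [pU, vP_eq, ← h1, ← h2, vdpXi]; ring
lemma e_pW (t x y : ℝ) : vdpXi t (x,y) * cos t = vF (pW x y) t := by
  obtain ⟨h1,h2,h3,h4,h5,h6,h7,h8⟩ := vhalf t x y
  rw [pW, vP_eq, ← h1, ← h3, vdpXi]; ring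
lemma e_dU1 (t x y : ℝ) : g1 t x y * (-sin t) = vF (dU1 x y) t := by
  obtain ⟨h1,h2,h3,h4,h5,h6,h7,h8⟩ := vhalf t x y
  rw [dU1, vF_add, vP_eq, vP_eq, ← h1, ← h2, ← h4, ← h6, g1]; ring
lemma e_dW1 (t x y : ℝ) : g1 t x y * cos t = vF (dW1 x y) t := by
  obtain ⟨h1,h2,h3,h4,h5,h6,h7,h8⟩ := vhalf t x y
  rw [dW1, vF_add, vP_eq, vP_eq, ← h1, ← h3, ← h4, ← h7, g1]; ring
lemma e_dU2 (t x y : ℝ) : g2 t x y * (-sin t) = vF (dU2 x y) t := by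
  obtain ⟨h1,h2,h3,h4,h5,h6,h7,h8⟩ := vhalf t x y
  rw [dU2, vF_add, vP_eq, vP_eq, ← h1, ← h2, ← h5, ← h7, g2]; ring
lemma e_dW2 (t x y : ℝ) : g2 t x y * cos t = vF (dW2 x y) t := by
  obtain ⟨h1,h2,h3,h4,h5,h6,h7,h8⟩ := vhalf t x y
  rw [dW2, vF_add, vP_eq, vP_eq, ← h1, ← h3, ← h5, ← h8, g2]; ring

lemma vfd (t x y : ℝ) (v : ℝ × ℝ) :
    fderiv ℝ (vdpXi t) (x,y) v = g1 t x y * v.1 + g2 t x y * v.2 := by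
  have f1 : HasFDerivAt (fun z : ℝ × ℝ => z.1) (ContinuousLinearMap.fst ℝ ℝ ℝ) (x,y) :=
    hasFDerivAt_fst
  have f2 : HasFDerivAt (fun z : ℝ × ℝ => z.2) (ContinuousLinearMap.snd ℝ ℝ ℝ) (x,y) :=
    hasFDerivAt_snd
  have h := ((((f1.const_mul (cos t)).add (f2.const_mul (sin t))).pow 2).const_sub 1).mul
    ((f1.const_mul (-sin t)).add (f2.const_mul (cos t)))
  have h' : HasFDerivAt (vdpXi t) _ (x,y) := h
  rw [h'.fderiv]
  simp [g1, g2]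
  ring

lemma vO_eval (a b : Fin 5 → ℝ) : vO a b (2*π) - vO a b 0 =
    b 0 * (a 0 * (2*π^2) - a 2 * π - a 4 * (π/2)) + 2*π*a 0*(b 2/2 + b 4/4)
    + π/2*(a 2*b 1 - a 1*b 2) + π/4*(a 4*b 3 - a 3*b 4) := by
  have c1 : cos (2*(2*π)) = 1 := by simpa using cos_nat_mul_two_pi 2
  have s1 : sin (2*(2*π)) = 0 := by rw [sin_two_mul]; simp
  have c2 : cos (4*(2*π)) = 1 := by simpa using cos_nat_mul_two_pi 4
  have s2 : sin (4*(2*π)) = 0 := by rw [vs4, s1]; simp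
  simp only [vO, vI, c1, s1, c2, s2, mul_zero, sin_zero, cos_zero]
  ring

/-- The second-order averaged vector field of the Van der Pol oscillator:
`−(1/(4π)) ∫₀^{2π} ∫₀ᵗ (ξ_t(X)(∇ξ_τ(X)·V_t)V_τ − ξ_τ(X)(∇ξ_t(X)·V_τ)V_t) dτ dt`
equals the explicit quintic polynomial vector field of the paper. Here
`∇ξ_t(X)·v` is realized as the Fréchet derivative of `x ↦ ξ_t(x)` at `X`
applied to `v`. -/
theorem vdp_second_order_average (X : ℝ × ℝ) :
    (-(1 / (4 * π))) • (∫ t in (0:ℝ)..(2 * π), ∫ τ in (0:ℝ)..t,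
        ((vdpXi t X * fderiv ℝ (vdpXi τ) X (vdpV t)) • vdpV τ
          - (vdpXi τ X * fderiv ℝ (vdpXi t) X (vdpV τ)) • vdpV t))
      = (1 / 256 : ℝ) •
          ((-X.2 * (32 - 24 * X.2 ^ 2 + 5 * X.2 ^ 4 - 88 * X.1 ^ 2
              + 21 * X.1 ^ 4 + 10 * X.1 ^ 2 * X.2 ^ 2),
            X.1 * (21 * X.1 ^ 4 + 32 - 88 * X.1 ^ 2 + 40 * X.2 ^ 2
              + 10 * X.1 ^ 2 * X.2 ^ 2 + 5 * X.2 ^ 4)) : ℝ × ℝ) := by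
  obtain ⟨x, y⟩ := X
  have hin : ∀ t τ : ℝ, ((vdpXi t (x,y) * fderiv ℝ (vdpXi τ) (x,y) (vdpV t)) • vdpV τ
          - (vdpXi τ (x,y) * fderiv ℝ (vdpXi t) (x,y) (vdpV τ)) • vdpV t) =
      (vF (pU x y) t * vF (dU1 x y) τ + vF (pW x y) t * vF (dU2 x y) τ
        - vF (dU1 x y) t * vF (pU x y) τ - vF (dU2 x y) t * vF (pW x y) τ,
       vF (pU x y) t * vF (dW1 x y) τ + vF (pW x y) t * vF (dW2 x y) τ
        - vF (dW1 x y) t * vF (pU x y) τ - vF (dW2 x y) t * vF (pW x y) τ) := by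
    intro t τ
    simp only [← e_pU, ← e_pW, ← e_dU1, ← e_dU2, ← e_dW1, ← e_dW2, vfd, vdpV]
    ext
    · simp; ring
    · simp; ring
  have hinner : ∀ t : ℝ, (∫ τ in (0:ℝ)..t,
        ((vdpXi t (x,y) * fderiv ℝ (vdpXi τ) (x,y) (vdpV t)) • vdpV τ
          - (vdpXi τ (x,y) * fderiv ℝ (vdpXi t) (x,y) (vdpV τ)) • vdpV t)) =
      (vF (pU x y) t * vI (dU1 x y) t + vF (pW x y) t * vI (dU2 x y) t
        - vF (dU1 x y) t * vI (pU x y) t - vF (dU2 x y) t * vI (pW x y) t,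
       vF (pU x y) t * vI (dW1 x y) t + vF (pW x y) t * vI (dW2 x y) t
        - vF (dW1 x y) t * vI (pU x y) t - vF (dW2 x y) t * vI (pW x y) t) := by
    intro t
    simp only [hin]
    rw [intervalIntegral.integral_eq_sub_of_hasDerivAt (f := fun τ =>
      (vF (pU x y) t * vI (dU1 x y) τ + vF (pW x y) t * vI (dU2 x y) τ
        - vF (dU1 x y) t * vI (pU x y) τ - vF (dU2 x y) t * vI (pW x y) τ,
       vF (pU x y) t * vI (dW1 x y) τ + vF (pW x y) t * vI (dW2 x y) τ
        - vF (dW1 x y) t * vI (pU x y) τ - vF (dW2 x y) t * vI (pW x y) τ))]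
    · simp [vI]
    · intro τ _
      have d := fun b => vI_deriv b τ
      exact HasDerivAt.prodMk
        (((((d _).const_mul _).add ((d _).const_mul _)).sub ((d _).const_mul _)).sub
          ((d _).const_mul _))
        (((((d _).const_mul _).add ((d _).const_mul _)).sub ((d _).const_mul _)).sub
          ((d _).const_mul _))
    · apply Continuous.intervalIntegrable
      have := vF_cont
      fun_prop
  simp only [hinner]
  rw [intervalIntegral.integral_eq_sub_of_hasDerivAt (f := fun t =>
      (vO (pU x y) (dU1 x y) t + vO (pW x y) (dU2 x y) t
        - vO (dU1 x y) (pU x y) t - vO (dU2 x y) (pW x y) t,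
       vO (pU x y) (dW1 x y) t + vO (pW x y) (dW2 x y) t
        - vO (dW1 x y) (pU x y) t - vO (dW2 x y) (pW x y) t))]
  rotate_left
  · intro t _
    exact HasDerivAt.prodMk
      ((((vO_deriv _ _ t).add (vO_deriv _ _ t)).sub (vO_deriv _ _ t)).sub (vO_deriv _ _ t))
      ((((vO_deriv _ _ t).add (vO_deriv _ _ t)).sub (vO_deriv _ _ t)).sub (vO_deriv _ _ t))
  · apply Continuous.intervalIntegrable
    have := vF_cont
    have := vI_cont
    fun_prop
  have E := fun a b => sub_eq_iff_eq_add.mp (vO_eval a b)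
  have hp : π ≠ 0 := pi_ne_zero
  simp only [E]
  ext
  · simp [pU, pW, dU1, dU2, dW1, dW2, vP]
    field_simp
    ring
  · simp [pU, pW, dU1, dU2, dW1, dW2, vP]
    field_simp
    ring
end
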